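/- Let d ≥ 1 and let K be a convex body in ℝ^d. Then the covering index of the cube satisfies coin([0,1]^d) = 2^{d+1}, and every convex body K ⊆ ℝ^d satisfies coin(K) ≥ 2^{d+1}; thus affine d-cubes minimize the covering index among all d-dimensional convex bodies. -/

import Mathlib

open Set Pointwise

section Defs

variable {V : Type*} [NormedAddCommGroup V] [NormedSpace ℝ V]

/-- A convex body: compact, convex, with nonempty interior. -/
def IsConvexBody (K : Set V) : Prop :=
  IsCompact K ∧ Convex ℝ K ∧ (interior K).Nonempty

/-- `K` can be covered by `m` homothets of ratio `lam`. -/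
def CoversWith (K : Set V) (lam : ℝ) (m : ℕ) : Prop :=
  ∃ t : Fin m → V, K ⊆ ⋃ i, (fun x => lam • x + t i) '' K

/-- The `m`-covering number `γ_m(K)`. -/
noncomputable def gammaC (m : ℕ) (K : Set V) : ℝ :=
  sInf {lam : ℝ | 0 < lam ∧ CoversWith K lam m}

/-- The covering index `coin(K)`. -/
noncomputable def coin (K : Set V) : ℝ :=
  sInf {r : ℝ | ∃ m : ℕ, 0 < m ∧ gammaC m K ≤ 1 / 2 ∧ r = (m : ℝ) / (1 - gammaC m K)}

/-- The weak covering index `wcoin(K)`. -/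
noncomputable def wcoin (K : Set V) : ℝ :=
  sInf {r : ℝ | ∃ m : ℕ, 0 < m ∧ gammaC m K < 1 ∧ r = (m : ℝ) / (1 - gammaC m K)}

/-- `N_λ(K)`: the least number of translates of `λ • K` needed to cover `K`. -/
noncomputable def covN (lam : ℝ) (K : Set V) : ℕ :=
  sInf {n : ℕ | CoversWith K lam n}

/-- A convex body is tightly covered if for every `0 < λ < 1` it contains `N_λ(K)`
points no two of which lie in a common homothet `λ • K + t`. -/
def TightlyCovered (K : Set V) : Prop :=
  ∀ lam : ℝ, 0 < lam → lam < 1 →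
    ∃ p : Fin (covN lam K) → V, (∀ i, p i ∈ K) ∧
      ∀ i j, i ≠ j → ∀ t : V,
        ¬(p i ∈ (fun x => lam • x + t) '' K ∧ p j ∈ (fun x => lam • x + t) '' K)

/-- The covering parameter `C(K)` of Swanepoel. -/
noncomputable def covParam (K : Set V) : ℝ :=
  sInf {r : ℝ | ∃ k : ℕ, ∃ lam : Fin k → ℝ, ∃ t : Fin k → V,
    (∀ i, 0 < lam i ∧ lam i < 1) ∧
    (K ⊆ ⋃ i, (fun x => lam i • x + t i) '' K) ∧
    r = ∑ i, 1 / (1 - lam i)}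

/-- The (multiplicative) Banach–Mazur distance. -/
noncomputable def distBM {d : ℕ} (K L : Set (Fin d → ℝ)) : ℝ :=
  sInf {δ : ℝ | 1 ≤ δ ∧ ∃ T : (Fin d → ℝ) ≃ₗ[ℝ] (Fin d → ℝ), ∃ a ∈ K, ∃ b ∈ L,
    (fun x => x - b) '' L ⊆ T '' ((fun x => x - a) '' K) ∧
    T '' ((fun x => x - a) '' K) ⊆ δ • ((fun x => x - b) '' L)}

end Defs

/-!
Comparing volumes, a covering of `K` by `m` homothets of ratio `γ` forces `m γ ^ d ≥ 1`, so
`m / (1 - γ) ≥ 1 / (γ ^ d (1 - γ))`. The product `γ ^ d (1 - γ)` increases up to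
`γ = d / (d + 1) ≥ 1 / 2`, so on `[0, 1 / 2]` it is at most its value `2 ^ (-(d + 1))` at `1 / 2`.
The subdivision of a cube into `2 ^ d` half-size cubes attains this bound.
-/

theorem pow_mul_two_sub_le_one {R : Type*} [CommRing R] [LinearOrder R] [IsStrictOrderedRing R]
    {x : R} (hx₀ : 0 ≤ x) (hx₁ : x ≤ 1) {n : ℕ} (hn : n ≠ 0) : x ^ n * (2 - x) ≤ 1 :=
  calc x ^ n * (2 - x) ≤ x * (2 - x) :=
        mul_le_mul_of_nonneg_right (pow_le_of_le_one hx₀ hx₁ hn) (by linarith)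
    _ = 1 - (1 - x) ^ 2 := by ring
    _ ≤ 1 := sub_le_self 1 (sq_nonneg _)

theorem two_pow_succ_le_div_one_sub {a γ : ℝ} {n : ℕ} (hn : n ≠ 0) (hγ₀ : 0 ≤ γ)
    (hγ : γ ≤ 1 / 2) (ha : 1 ≤ a * γ ^ n) : 2 ^ (n + 1) ≤ a / (1 - γ) := by
  have ha₀ : 0 ≤ a := by
    by_contra! h
    linarith [mul_nonpos_of_nonpos_of_nonneg h.le (pow_nonneg hγ₀ n)]
  rw [le_div_iff₀ (by linarith)]
  calc 2 ^ (n + 1) * (1 - γ) ≤ 2 ^ (n + 1) * (1 - γ) * (a * γ ^ n) :=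
        le_mul_of_one_le_right (mul_nonneg (by positivity) (by linarith)) ha
    _ = a * ((2 * γ) ^ n * (2 - 2 * γ)) := by ring
    _ ≤ a := mul_le_of_le_one_right ha₀ <|
        pow_mul_two_sub_le_one (by linarith) (by linarith) hn

section Covering

variable {V : Type*} [NormedAddCommGroup V] [NormedSpace ℝ V] {K : Set V} {lam : ℝ} {m : ℕ}

theorem CoversWith.of_fintype {ι : Type*} [Fintype ι] (t : ι → V)
    (ht : K ⊆ ⋃ i, (fun x => lam • x + t i) '' K) : CoversWith K lam (Fintype.card ι) :=
  ⟨t ∘ (Fintype.equivFin ι).symm, ht.trans_eq <| Eq.symm <|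
    (Fintype.equivFin ι).symm.surjective.iUnion_comp fun i => (fun x => lam • x + t i) '' K⟩

theorem coversWith_one (K : Set V) (hm : 0 < m) : CoversWith K 1 m :=
  ⟨fun _ => 0, fun x hx => mem_iUnion.2 ⟨⟨0, hm⟩, x, hx, by simp⟩⟩

theorem CoversWith.pos (h : CoversWith K lam m) (hK : K.Nonempty) : 0 < m := by
  obtain ⟨t, ht⟩ := h
  obtain ⟨i, -⟩ := mem_iUnion.1 (ht hK.some_mem)
  exact i.pos

theorem exists_coversWith_of_totallyBounded (hK : TotallyBounded K) (hK' : (interior K).Nonempty)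
    (hlam : lam ≠ 0) : ∃ m, CoversWith K lam m := by
  obtain ⟨p, hp⟩ := hK'
  have hU : (lam • p + ·) ⁻¹' (lam • K) ∈ nhds 0 := by
    refine (continuous_const_add (lam • p)).continuousAt ?_
    simpa using smul_mem_nhds_smul₀ hlam (mem_interior_iff_mem_nhds.1 hp)
  obtain ⟨s, hs, hKs⟩ := totallyBounded_iff_subset_finite_iUnion_nhds_zero.1 hK _ hU
  have := hs.fintype
  refine ⟨_, .of_fintype (fun y : s => (y : V) - lam • p) fun x hx => ?_⟩
  obtain ⟨y, hy, u, ⟨z, hz, hzu : lam • z = lam • p + u⟩, rfl⟩ := mem_iUnion₂.1 (hKs hx)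
  refine mem_iUnion.2 ⟨⟨y, hy⟩, z, hz, ?_⟩
  simp only [hzu, vadd_eq_add]
  abel

open MeasureTheory Module in
theorem CoversWith.one_le_mul_abs_pow [FiniteDimensional ℝ V] [MeasurableSpace V] [BorelSpace V]
    (μ : Measure V) [μ.IsAddHaarMeasure] (hK₀ : μ K ≠ 0) (hK : μ K ≠ ⊤) (h : CoversWith K lam m) :
    1 ≤ m * |lam| ^ finrank ℝ V := by
  obtain ⟨t, ht⟩ := h
  have volume_homothet (i : Fin m) :
      μ ((fun x => lam • x + t i) '' K) = ENNReal.ofReal (|lam| ^ finrank ℝ V) * μ K := by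
    have : (fun x => lam • x + t i) '' K = (· + t i) '' (lam • K) := by
      rw [← image_smul, image_image]
    rw [this, image_add_right, measure_preimage_add_right, Measure.addHaar_smul, abs_pow]
  have volume_le : μ K ≤ ENNReal.ofReal (m * |lam| ^ finrank ℝ V) * μ K :=
    calc μ K ≤ μ (⋃ i, (fun x => lam • x + t i) '' K) := measure_mono ht
      _ ≤ ∑ i, μ ((fun x => lam • x + t i) '' K) := measure_iUnion_fintype_le _ _
      _ = ENNReal.ofReal (m * |lam| ^ finrank ℝ V) * μ K := by
        simp [volume_homothet, ENNReal.ofReal_mul, mul_assoc]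
  rwa [← ENNReal.one_le_ofReal, ← ENNReal.mul_le_mul_iff_left hK₀ hK, one_mul]

theorem gammaC_nonneg (m : ℕ) (K : Set V) : 0 ≤ gammaC m K :=
  Real.sInf_nonneg fun _ h => h.1.le

theorem CoversWith.gammaC_le (h : CoversWith K lam m) (hlam : 0 < lam) : gammaC m K ≤ lam :=
  csInf_le ⟨0, fun _ h => h.1.le⟩ ⟨hlam, h⟩

open MeasureTheory Module in
theorem one_le_mul_gammaC_pow [FiniteDimensional ℝ V] [MeasurableSpace V] [BorelSpace V]
    (μ : Measure V) [μ.IsAddHaarMeasure] (hK₀ : μ K ≠ 0) (hK : μ K ≠ ⊤) (hm : 0 < m) :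
    1 ≤ m * gammaC m K ^ finrank ℝ V := by
  have hclosed : IsClosed {x : ℝ | 1 ≤ m * x ^ finrank ℝ V} :=
    isClosed_le (by fun_prop) (by fun_prop)
  refine closure_minimal ?_ hclosed <|
    csInf_mem_closure ⟨1, one_pos, coversWith_one K hm⟩ ⟨0, fun _ h => h.1.le⟩
  rintro x ⟨hx, hcov⟩
  have hvol := hcov.one_le_mul_abs_pow μ hK₀ hK
  rwa [abs_of_pos hx] at hvol

theorem CoversWith.coin_le (h : CoversWith K lam m) (hm : 0 < m) (hlam₀ : 0 < lam)
    (hlam : lam ≤ 1 / 2) : coin K ≤ m / (1 - lam) := by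
  have hγ : gammaC m K ≤ lam := h.gammaC_le hlam₀
  have hbdd : BddBelow
      {r : ℝ | ∃ m : ℕ, 0 < m ∧ gammaC m K ≤ 1 / 2 ∧ r = m / (1 - gammaC m K)} := by
    refine ⟨0, ?_⟩
    rintro _ ⟨n, -, hn, rfl⟩
    exact div_nonneg n.cast_nonneg (by linarith)
  calc coin K ≤ m / (1 - gammaC m K) := csInf_le hbdd ⟨m, hm, hγ.trans hlam, rfl⟩
    _ ≤ m / (1 - lam) := by gcongr; linarith

open MeasureTheory Module in
theorem two_pow_finrank_succ_le_coin [FiniteDimensional ℝ V] [Nontrivial V]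
    (hK : Bornology.IsBounded K) (hK' : (interior K).Nonempty) :
    2 ^ (finrank ℝ V + 1) ≤ coin K := by
  borelize V
  have := FiniteDimensional.proper ℝ V
  have hK₀ : Measure.addHaar K ≠ 0 := (Measure.measure_pos_of_nonempty_interior _ hK').ne'
  have htot : TotallyBounded K := hK.isCompact_closure.totallyBounded.subset subset_closure
  obtain ⟨m, hcov⟩ :=
    exists_coversWith_of_totallyBounded htot hK' (one_half_pos (α := ℝ)).ne'
  have hm : 0 < m := hcov.pos (hK'.mono interior_subset)
  refine le_csInf ⟨_, m, hm, hcov.gammaC_le one_half_pos, rfl⟩ ?_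
  rintro _ ⟨n, hn, hγ, rfl⟩
  exact two_pow_succ_le_div_one_sub finrank_pos.ne' (gammaC_nonneg n K) hγ
    (one_le_mul_gammaC_pow _ hK₀ hK.measure_lt_top.ne hn)

end Covering

section Parallelepiped

open Module

theorem exists_fin_mul_sub_mem_Icc (n : ℕ) [NeZero n] {x : ℝ} (hx : x ∈ Icc (0 : ℝ) 1) :
    ∃ k : Fin n, n * x - k ∈ Icc (0 : ℝ) 1 := by
  have hn : (0 : ℝ) < n := Nat.cast_pos.2 (NeZero.pos n)
  have hnx : 0 ≤ n * x := mul_nonneg hn.le hx.1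
  have hceil : ⌈n * x⌉₊ ≤ n := Nat.ceil_le.2 (mul_le_of_le_one_right hn.le hx.2)
  -- `⌊n * x⌋₊` is out of range at `x = 1`; at `x = 0` the subtraction below truncates to `0`.
  refine ⟨⟨⌈n * x⌉₊ - 1, by have := NeZero.pos n; omega⟩, ?_⟩
  rcases Nat.eq_zero_or_pos ⌈n * x⌉₊ with h | h
  · have : n * x = 0 := (Nat.ceil_eq_zero.1 h).antisymm hnx
    simp [this]
  · have := Nat.le_ceil (n * x)
    have := Nat.ceil_lt_add_one hnx
    rw [Nat.cast_pred h]
    constructor <;> linarith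

variable {ι V : Type*} [Fintype ι] [NormedAddCommGroup V] [NormedSpace ℝ V]

theorem coversWith_parallelepiped (b : Basis ι ℝ V) (n : ℕ) [NeZero n] :
    CoversWith (parallelepiped b) (n : ℝ)⁻¹ (n ^ Fintype.card ι) := by
  classical
  let corner (k : ι → Fin n) : V := b.equivFun.symm fun i => (k i : ℝ)
  have hcov : parallelepiped b ⊆
      ⋃ k, (fun x => (n : ℝ)⁻¹ • x + (n : ℝ)⁻¹ • corner k) '' parallelepiped b := by
    intro x hx
    rw [parallelepiped_basis_eq] at hx
    choose k hk using fun i => exists_fin_mul_sub_mem_Icc n (hx i)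
    refine mem_iUnion.2 ⟨k, (n : ℝ) • x - corner k, ?_, ?_⟩
    · simpa [parallelepiped_basis_eq, corner, ← Basis.equivFun_apply] using hk
    · simp [smul_sub, inv_smul_smul₀, NeZero.ne]
  simpa using CoversWith.of_fintype _ hcov

theorem coin_parallelepiped_le (b : Basis ι ℝ V) :
    coin (parallelepiped b) ≤ 2 ^ (Fintype.card ι + 1) :=
  calc coin (parallelepiped b) ≤ ((2 ^ Fintype.card ι : ℕ) : ℝ) / (1 - ((2 : ℕ) : ℝ)⁻¹) :=
        (coversWith_parallelepiped b 2).coin_le (by positivity) (by norm_num) (by norm_num)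
    _ = 2 ^ (Fintype.card ι + 1) := by push_cast; ring

theorem coin_cube_min_general [Nonempty ι] (b : Basis ι ℝ V) :
    coin (parallelepiped b) = 2 ^ (Fintype.card ι + 1) ∧
    ∀ K : Set V, Bornology.IsBounded K → (interior K).Nonempty →
      (2 : ℝ) ^ (Fintype.card ι + 1) ≤ coin K := by
  have : FiniteDimensional ℝ V := b.finiteDimensional_of_finite
  have hcard : finrank ℝ V = Fintype.card ι := finrank_eq_card_basis b
  have : Nontrivial V := nontrivial_of_finrank_pos (R := ℝ) (hcard ▸ Fintype.card_pos)
  rw [← hcard]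
  refine ⟨le_antisymm ?_ ?_, fun K hK hK' => two_pow_finrank_succ_le_coin hK hK'⟩
  · exact hcard ▸ coin_parallelepiped_le b
  · exact two_pow_finrank_succ_le_coin b.parallelepiped.isCompact.isBounded
      b.parallelepiped.interior_nonempty

end Parallelepiped

/-- affine `d`-cubes minimize the covering index. -/
theorem coin_cube_min (d : ℕ) (hd : 1 ≤ d) :
    coin (Set.Icc (0 : Fin d → ℝ) 1) = 2 ^ (d + 1) ∧
    ∀ K : Set (Fin d → ℝ), IsConvexBody K → (2 : ℝ) ^ (d + 1) ≤ coin K := by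
  have : NeZero d := ⟨by omega⟩
  obtain ⟨hcube, hmin⟩ := coin_cube_min_general (Pi.basisFun ℝ (Fin d))
  have hparallelepiped : parallelepiped (Pi.basisFun ℝ (Fin d)) = Icc (0 : Fin d → ℝ) 1 := by
    ext x
    simp [parallelepiped_basis_eq, Pi.le_def, forall_and]
  rw [hparallelepiped, Fintype.card_fin] at hcube
  rw [Fintype.card_fin] at hmin
  exact ⟨hcube, fun K hK => hmin K hK.1.isBounded hK.2.2⟩
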